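/- Fix k > 0 and suppose n > max(2k, 4096). Let (Y_t) be the Gibbs sampler on M_n with Y_0 distributed according to U_n. Then P[min_{1≤i≤n, j∈{1,2}} min_{0≤t≤n²−1} Y_t[i,j] ≤ n^{−5.5−k}] ≤ 2·n^{−k}, and likewise P[max_{1≤i≤n, j∈{1,2}} max_{0≤t≤n²−1} Y_t[i,j] ≥ 2 − n^{−5.5−k}] ≤ 2·n^{−k}. -/

import Mathlib

open MeasureTheory

noncomputable section

/-- Uniform probability measure on a finset. -/
def unifOn {α : Type*} [MeasurableSpace α] (s : Finset α) : Measure α :=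
  (s.card : ENNReal)⁻¹ • ∑ a ∈ s, Measure.dirac a

/-- Total variation distance between two measures. -/
def tvDist {α : Type*} [MeasurableSpace α] (μ ν : Measure α) : ℝ :=
  ⨆ A : {A : Set α // MeasurableSet A}, ((μ A).toReal - (ν A).toReal)

/-- The set `M_n` of nonnegative `n × 2` matrices with row sums `2` and column sums `n`. -/
def MSet (n : ℕ) : Set (Fin n × Fin 2 → ℝ) :=
  {x | (∀ p, 0 ≤ x p) ∧ (∀ i : Fin n, x (i, 0) + x (i, 1) = 2) ∧
    (∀ j : Fin 2, ∑ i : Fin n, x (i, j) = n)}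

/-- The uniform (normalized `(n-1)`-dimensional Hausdorff) measure on `M_n`. -/
def UM (n : ℕ) : Measure (Fin n × Fin 2 → ℝ) :=
  (μH[(n : ℝ) - 1] (MSet n))⁻¹ • (μH[(n : ℝ) - 1]).restrict (MSet n)

/-- One step of the Gibbs sampler on `M_n`, updating the pair of rows `u.1 = (i, j)`
using the uniform variable `u.2 = λ`. -/
def stepM (n : ℕ) (x : Fin n × Fin 2 → ℝ) (u : (Fin n × Fin n) × ℝ) :
    Fin n × Fin 2 → ℝ := fun p =>
  let i := u.1.1
  let j := u.1.2
  let l := u.2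
  let d := 2 - x (i, 0) - x (j, 0)
  if p = (i, 0) then (if 0 ≤ d then l * (2 - d) else 2 * l - (1 - l) * d)
  else if p = (j, 0) then (if 0 ≤ d then (1 - l) * (2 - d) else 2 * (1 - l) - l * d)
  else if p = (i, 1) then (if 0 ≤ d then 2 * (1 - l) + l * d else (1 - l) * (2 + d))
  else if p = (j, 1) then (if 0 ≤ d then 2 * l + (1 - l) * d else l * (2 + d))
  else x p

/-- The set of ordered pairs `(i, j)` with `i < j`. -/
def pairsF (n : ℕ) : Finset (Fin n × Fin n) := Finset.univ.filter fun p => p.1 < p.2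

/-- Law of the random update datum: `(i, j)` uniform among pairs `i < j`, and
`λ` uniform on `[0,1]`. -/
def driveM (n : ℕ) : Measure ((Fin n × Fin n) × ℝ) :=
  (unifOn (pairsF n)).prod ((volume : Measure ℝ).restrict (Set.Icc 0 1))

/-- Law of the Gibbs sampler on `M_n` after `T` steps started at `x`. -/
def lawM (n : ℕ) (x : Fin n × Fin 2 → ℝ) (T : ℕ) : Measure (Fin n × Fin 2 → ℝ) :=
  Measure.map (fun ω : Fin T → (Fin n × Fin n) × ℝ => (List.ofFn ω).foldl (stepM n) x)
    (Measure.pi fun _ => driveM n)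

/-- Law of the `(T+1)`-step path of the Gibbs sampler on `M_n` with initial distribution `μ`. -/
def pathM (n T : ℕ) (μ : Measure (Fin n × Fin 2 → ℝ)) :
    Measure (Fin (T + 1) → Fin n × Fin 2 → ℝ) :=
  Measure.map (fun p : (Fin n × Fin 2 → ℝ) × (Fin T → (Fin n × Fin n) × ℝ) =>
      fun s : Fin (T + 1) => ((List.ofFn p.2).take s).foldl (stepM n) p.1)
    (μ.prod (Measure.pi fun _ => driveM n))



def AffM (n : ℕ) : Set (Fin n × Fin 2 → ℝ) :=
  {x | (∀ i : Fin n, x (i, 0) + x (i, 1) = 2) ∧ (∀ j : Fin 2, ∑ i : Fin n, x (i, j) = n)}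

def dirV (n : ℕ) (i j : Fin n) : Fin n × Fin 2 → ℝ := fun p =>
  if p = (i, 0) then 1 else if p = (j, 0) then -1 else if p = (i, 1) then -1
  else if p = (j, 1) then 1 else 0

def loM (s : ℝ) : ℝ := max 0 (s - 2)
def hiM (s : ℝ) : ℝ := min 2 s

lemma dirV_row (n : ℕ) (i j : Fin n) (a : Fin n) :
    dirV n i j (a, 0) + dirV n i j (a, 1) = 0 := by
  unfold dirV
  simp only [Prod.mk.injEq]
  by_cases h1 : a = i <;> by_cases h2 : a = j <;> simp [h1, h2]
  split_ifs <;> simp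

lemma dirV_zero (n : ℕ) (i j : Fin n) (hij : i ≠ j) (a : Fin n) :
    dirV n i j (a, 0) = (if a = i then 1 else 0) - (if a = j then 1 else 0) := by
  unfold dirV
  simp only [Prod.mk.injEq]
  by_cases h1 : a = i
  · subst h1; simp [hij]
  · by_cases h2 : a = j
    · subst h2; simp [hij.symm]
    · simp [h1, h2]

lemma dirV_one (n : ℕ) (i j : Fin n) (hij : i ≠ j) (a : Fin n) :
    dirV n i j (a, 1) = -((if a = i then 1 else 0) - (if a = j then 1 else 0)) := by
  have := dirV_row n i j a
  rw [dirV_zero n i j hij] at this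
  linarith

lemma dirV_col (n : ℕ) (i j : Fin n) (hij : i ≠ j) (b : Fin 2) :
    ∑ a, dirV n i j (a, b) = 0 := by
  fin_cases b
  · simp [dirV_zero n i j hij, Finset.sum_sub_distrib]
  · simp [dirV_one n i j hij, Finset.sum_sub_distrib]

lemma AffM_add (n : ℕ) (i j : Fin n) (hij : i ≠ j) (r : ℝ) (x : Fin n × Fin 2 → ℝ) :
    x + r • dirV n i j ∈ AffM n ↔ x ∈ AffM n := by
  unfold AffM
  have h1 : ∀ a, (x + r • dirV n i j) (a, 0) + (x + r • dirV n i j) (a, 1)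
      = x (a, 0) + x (a, 1) := by
    intro a
    have := dirV_row n i j a
    simp only [Pi.add_apply, Pi.smul_apply, smul_eq_mul]
    linear_combination r * this
  have h2 : ∀ b, ∑ a, (x + r • dirV n i j) (a, b) = ∑ a, x (a, b) := by
    intro b
    simp [Finset.sum_add_distrib, ← Finset.mul_sum, dirV_col n i j hij]
  simp only [Set.mem_ofPred_eq, h1, h2]

lemma MSet_iff (n : ℕ) (x : Fin n × Fin 2 → ℝ) :
    x ∈ MSet n ↔ (∀ p, 0 ≤ x p) ∧ x ∈ AffM n := Iff.rfl

lemma mem_MSet_le (n : ℕ) (x : Fin n × Fin 2 → ℝ) (hx : x ∈ MSet n) (a : Fin n) :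
    0 ≤ x (a, 0) ∧ x (a, 0) ≤ 2 ∧ x (a, 1) = 2 - x (a, 0) := by
  have := hx.1 (a, 0); have := hx.1 (a, 1); have := hx.2.1 a
  refine ⟨?_, ?_, ?_⟩ <;> linarith

lemma MSet_add (n : ℕ) (i j : Fin n) (hij : i ≠ j) (r : ℝ) (x : Fin n × Fin 2 → ℝ)
    (hx : x ∈ MSet n) :
    x + r • dirV n i j ∈ MSet n ↔
      loM (x (i, 0) + x (j, 0)) ≤ x (i, 0) + r ∧ x (i, 0) + r ≤ hiM (x (i, 0) + x (j, 0)) := by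
  rw [MSet_iff, AffM_add n i j hij, and_iff_left ((MSet_iff n x).1 hx).2]
  unfold loM hiM
  simp only [max_le_iff, le_min_iff]
  have hi := mem_MSet_le n x hx i
  have hj := mem_MSet_le n x hx j
  constructor
  · intro h
    have a1 := h (i, 0)
    have a2 := h (j, 0)
    have a3 := h (i, 1)
    have a4 := h (j, 1)
    simp [dirV_zero n i j hij, dirV_one n i j hij, hij, hij.symm] at a1 a2 a3 a4
    refine ⟨⟨?_, ?_⟩, ?_, ?_⟩ <;> linarith
  · rintro ⟨⟨a1, a2⟩, a3, a4⟩ ⟨a, b⟩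
    have ha := mem_MSet_le n x hx a
    fin_cases b
    · simp only [Fin.zero_eta, Pi.add_apply, Pi.smul_apply, smul_eq_mul, dirV_zero n i j hij]
      by_cases h1 : a = i
      · subst h1; simp [hij]; linarith
      · by_cases h2 : a = j
        · subst h2; simp [h1]; linarith
        · simp [h1, h2]; linarith
    · simp only [Fin.mk_one, Pi.add_apply, Pi.smul_apply, smul_eq_mul, dirV_one n i j hij]
      by_cases h1 : a = i
      · subst h1; simp [hij]; linarith
      · by_cases h2 : a = j
        · subst h2; simp [h1]; linarith
        · simp [h1, h2]; linarith

lemma step_eq (n : ℕ) (i j : Fin n) (hij : i ≠ j) (l : ℝ) (x : Fin n × Fin 2 → ℝ)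
    (hx : x ∈ MSet n) :
    stepM n x ((i, j), l) = x + (loM (x (i, 0) + x (j, 0)) +
      l * (hiM (x (i, 0) + x (j, 0)) - loM (x (i, 0) + x (j, 0))) - x (i, 0)) • dirV n i j := by
  have hi := mem_MSet_le n x hx i
  have hj := mem_MSet_le n x hx j
  obtain ⟨lo, hlo⟩ : ∃ y, y = loM (x (i, 0) + x (j, 0)) := ⟨_, rfl⟩
  obtain ⟨hh, hhi⟩ : ∃ y, y = hiM (x (i, 0) + x (j, 0)) := ⟨_, rfl⟩
  have hcase : (0 ≤ 2 - x (i, 0) - x (j, 0) ∧ lo = 0 ∧ hh = x (i, 0) + x (j, 0)) ∨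
      (¬ 0 ≤ 2 - x (i, 0) - x (j, 0) ∧ lo = x (i, 0) + x (j, 0) - 2 ∧ hh = 2) := by
    rw [hlo, hhi]
    unfold loM hiM
    by_cases h : 0 ≤ 2 - x (i, 0) - x (j, 0)
    · left; exact ⟨h, max_eq_left (by linarith), min_eq_right (by linarith)⟩
    · right; push Not at h; exact ⟨not_le.2 h, max_eq_right (by linarith), min_eq_left (by linarith)⟩
  rw [← hlo, ← hhi]
  funext ⟨a, b⟩
  unfold stepM
  simp only [Pi.add_apply, Pi.smul_apply, smul_eq_mul]
  rcases hcase with ⟨h, h1, h2⟩ | ⟨h, h1, h2⟩ <;> rw [h1, h2] <;> simp only [h, if_true, if_false] <;>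
  fin_cases b <;>
  simp only [Fin.zero_eta, Fin.mk_one, dirV_zero n i j hij, dirV_one n i j hij, Prod.mk.injEq] <;>
  by_cases c1 : a = i
  all_goals first
    | (rw [c1]; simp [hij]; left; ring)
    | (rw [c1]; simp [hij]; ring; done)
    | (rw [c1]; simp [hij]; linarith)
    | (by_cases c2 : a = j
       · rw [c2]; simp [hij.symm]; linarith
       · simp [c1, c2])

lemma measurableSet_AffM (n : ℕ) : MeasurableSet (AffM n) := by
  unfold AffM
  have : {x : Fin n × Fin 2 → ℝ | (∀ i : Fin n, x (i, 0) + x (i, 1) = 2) ∧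
    (∀ j : Fin 2, ∑ i : Fin n, x (i, j) = n)} = (⋂ i, {x | x (i, 0) + x (i, 1) = 2}) ∩
      ⋂ j, {x | ∑ i : Fin n, x (i, j) = (n : ℝ)} := by ext; simp
  rw [this]
  refine (MeasurableSet.iInter fun i => measurableSet_eq_fun (by fun_prop) (by fun_prop)).inter
    (MeasurableSet.iInter fun i => measurableSet_eq_fun (by fun_prop) (by fun_prop))

lemma measurableSet_MSet (n : ℕ) : MeasurableSet (MSet n) := by
  have : MSet n = (⋂ p, {x | 0 ≤ x p}) ∩ AffM n := by
    ext x; rw [MSet_iff]; simp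
  rw [this]
  exact (MeasurableSet.iInter fun i => measurableSet_le (by fun_prop) (by fun_prop)).inter
    (measurableSet_AffM n)

lemma measurable_step_fix (n : ℕ) (c : Fin n × Fin n) :
    Measurable (fun p : (Fin n × Fin 2 → ℝ) × ℝ => stepM n p.1 (c, p.2)) := by
  refine measurable_pi_lambda _ fun q => ?_
  unfold stepM
  have hm : MeasurableSet {p : (Fin n × Fin 2 → ℝ) × ℝ | 0 ≤ 2 - p.1 (c.1, 0) - p.1 (c.2, 0)} :=
    measurableSet_le (by fun_prop) (by fun_prop)
  dsimp only
  split_ifs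
  all_goals first
    | fun_prop
    | exact Measurable.ite hm (by fun_prop) (by fun_prop)

lemma measurable_step (n : ℕ) :
    Measurable (fun p : (Fin n × Fin 2 → ℝ) × ((Fin n × Fin n) × ℝ) => stepM n p.1 p.2) := by
  have h : Measurable (fun p : ((Fin n × Fin 2 → ℝ) × ℝ) × (Fin n × Fin n) =>
      stepM n p.1.1 (p.2, p.1.2)) :=
    measurable_from_prod_countable_left fun c => measurable_step_fix n c
  exact h.comp (f := fun p : (Fin n × Fin 2 → ℝ) × ((Fin n × Fin n) × ℝ) =>
    ((p.1, p.2.2), p.2.1)) (by fun_prop)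

def kerV (n : ℕ) : Submodule ℝ (Fin n × Fin 2 → ℝ) where
  carrier := {x | (∀ i : Fin n, x (i, 0) + x (i, 1) = 0) ∧ (∀ j : Fin 2, ∑ i : Fin n, x (i, j) = 0)}
  add_mem' := by
    rintro x y ⟨h1, h2⟩ ⟨h3, h4⟩
    refine ⟨fun i => ?_, fun j => ?_⟩
    · have := h1 i; have := h3 i; simp only [Pi.add_apply]; linarith
    · simp [Finset.sum_add_distrib, h2, h4]
  zero_mem' := by simp
  smul_mem' := by
    rintro c x ⟨h1, h2⟩
    refine ⟨fun i => ?_, fun j => ?_⟩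
    · have := h1 i; simp only [Pi.smul_apply, smul_eq_mul]; linear_combination c * this
    · simp [← Finset.mul_sum, h2]

lemma finrank_kerV (m : ℕ) : Module.finrank ℝ (kerV (m + 1)) ≤ m := by
  let f : kerV (m + 1) →ₗ[ℝ] (Fin m → ℝ) :=
    (LinearMap.pi fun a : Fin m => LinearMap.proj (a.succ, (0 : Fin 2))) ∘ₗ (kerV (m + 1)).subtype
  have hf : Function.Injective f := by
    rw [← LinearMap.ker_eq_bot, LinearMap.ker_eq_bot']
    rintro ⟨x, h1, h2⟩ hx
    have h3 : ∀ a : Fin m, x (a.succ, 0) = 0 := fun a => congrFun hx a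
    have h4 := h2 0
    rw [Fin.sum_univ_succ] at h4
    simp only [h3, Finset.sum_const_zero, add_zero] at h4
    have h5 : ∀ a, x (a, 0) = 0 := fun a => Fin.cases h4 h3 a
    apply Subtype.ext
    funext ⟨a, b⟩
    have h6 := h1 a
    have h7 := h5 a
    fin_cases b
    · exact h7
    · show x (a, 1) = 0
      linarith
  simpa using LinearMap.finrank_le_finrank_of_injective hf

lemma sfinite_AffM (n : ℕ) (hn : 0 < n) :
    SFinite ((μH[(n : ℝ) - 1] : Measure (Fin n × Fin 2 → ℝ)).restrict (AffM n)) := by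
  obtain ⟨m, rfl⟩ : ∃ m, n = m + 1 := ⟨n - 1, by omega⟩
  have hd : ((m + 1 : ℕ) : ℝ) - 1 = m := by push_cast; ring
  rw [hd]
  let f : kerV (m + 1) → (Fin (m + 1) × Fin 2 → ℝ) := fun w => w.1 + fun _ => 1
  have hf : Isometry f := by
    intro a b
    simp only [f, edist_add_right]
    rfl
  have hr : Set.range f = AffM (m + 1) := by
    ext x
    constructor
    · rintro ⟨⟨w, h1, h2⟩, rfl⟩
      refine ⟨fun i => ?_, fun j => ?_⟩
      · have := h1 i; simp only [f, Pi.add_apply]; linarith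
      · simp [f, Finset.sum_add_distrib, h2]
    · rintro ⟨h1, h2⟩
      refine ⟨⟨x - fun _ => 1, ⟨fun i => ?_, fun j => ?_⟩⟩, ?_⟩
      · have := h1 i; simp only [Pi.sub_apply]; linarith
      · have := h2 j
        simp only [Pi.sub_apply, Finset.sum_sub_distrib, this]; simp
      · simp [f]
  have hmap := hf.map_hausdorffMeasure (d := (m : ℝ)) (Or.inl (Nat.cast_nonneg m))
  rw [hr] at hmap
  rw [← hmap]
  have : SFinite (μH[(m : ℝ)] : Measure (kerV (m + 1))) := by
    rcases (finrank_kerV m).lt_or_eq with h | h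
    · rw [Real.hausdorffMeasure_of_finrank_lt (by exact_mod_cast h)]
      infer_instance
    · have : (μH[(m : ℝ)] : Measure (kerV (m + 1))) =
        μH[(Module.finrank ℝ (kerV (m + 1)) : ℝ)] := by rw [h]
      rw [this]
      infer_instance
  infer_instance

lemma mp_translate (n : ℕ) (i j : Fin n) (hij : i ≠ j) (r : ℝ) :
    MeasurePreserving (fun x => x + r • dirV n i j)
      ((μH[(n : ℝ) - 1] : Measure (Fin n × Fin 2 → ℝ)).restrict (AffM n))
      ((μH[(n : ℝ) - 1] : Measure (Fin n × Fin 2 → ℝ)).restrict (AffM n)) := by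
  have h := ((IsometryEquiv.addRight (r • dirV n i j)).measurePreserving_hausdorffMeasure
    ((n : ℝ) - 1)).restrict_preimage (measurableSet_AffM n)
  have h2 : (IsometryEquiv.addRight (r • dirV n i j)) ⁻¹' (AffM n) = AffM n := by
    ext x; exact AffM_add n i j hij r x
  rw [h2] at h
  exact h

lemma swap_abs {X : Type*} [AddCommGroup X] [Module ℝ X] [MeasurableSpace X]
    [MeasurableAdd₂ X] [MeasurableSMul₂ ℝ X] (μ : Measure X) [SFinite μ] (v : X)
    (hv : ∀ r : ℝ, MeasurePreserving (fun x => x + r • v) μ μ)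
    (M B : Set X) (hM : MeasurableSet M) (hB : MeasurableSet B) (W : X → ENNReal)
    (hW : Measurable W) (hWv : ∀ (r : ℝ) x, W (x + r • v) = W x) :
    ∫⁻ x in M, W x * volume {r : ℝ | x + r • v ∈ M ∩ B} ∂μ =
    ∫⁻ x in M ∩ B, W x * volume {r : ℝ | x + r • v ∈ M} ∂μ := by
  have hMB := hM.inter hB
  have hadd : Measurable (fun p : X × ℝ => p.1 + p.2 • v) := by fun_prop
  have key : ∀ C : Set X, MeasurableSet C → ∀ x, volume {r : ℝ | x + r • v ∈ C} =
      ∫⁻ r : ℝ, C.indicator 1 (x + r • v) := by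
    intro C hC x
    have h : MeasurableSet {r : ℝ | x + r • v ∈ C} :=
      (hadd.comp (f := fun r : ℝ => (x, r)) (by fun_prop)) hC
    rw [← lintegral_indicator_one h]
    rfl
  rw [← lintegral_indicator hM, ← lintegral_indicator hMB]
  have e1 : ∀ x, M.indicator (fun x => W x * volume {r : ℝ | x + r • v ∈ M ∩ B}) x =
      ∫⁻ r : ℝ, M.indicator W x * (M ∩ B).indicator 1 (x + r • v) := by
    intro x
    rw [lintegral_const_mul, ← key _ hMB]
    · by_cases h : x ∈ M <;> simp [h]
    · exact (measurable_one.indicator hMB).comp (hadd.comp (f := fun r : ℝ => (x, r)) (by fun_prop))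
  have e2 : ∀ x, (M ∩ B).indicator (fun x => W x * volume {r : ℝ | x + r • v ∈ M}) x =
      ∫⁻ r : ℝ, (M ∩ B).indicator W x * M.indicator 1 (x + (-r) • v) := by
    intro x
    rw [lintegral_const_mul]
    · rw [lintegral_neg_eq_self (fun r : ℝ => M.indicator (1 : X → ENNReal) (x + r • v)), ← key _ hM]
      by_cases h : x ∈ M ∩ B <;> simp only [h, Set.indicator_of_mem, Set.indicator_of_notMem,
        not_false_eq_true, zero_mul]
    · exact (measurable_one.indicator hM).comp (hadd.comp (f := fun r : ℝ => (x, -r)) (by fun_prop))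
  simp_rw [e1, e2]
  refine Eq.trans (lintegral_lintegral_swap ?_) (Eq.trans ?_ (lintegral_lintegral_swap ?_).symm)
  rotate_left
  · refine lintegral_congr fun r => ?_
    rw [← (hv r).lintegral_comp (f := fun x => (M ∩ B).indicator W x * M.indicator 1 (x + (-r) • v))]
    · refine lintegral_congr fun x => ?_
      have : x + r • v + (-r) • v = x := by module
      rw [this]
      by_cases h1 : x ∈ M <;> by_cases h2 : x + r • v ∈ M ∩ B <;> simp only [h1, h2, hWv,
        Set.indicator_of_mem, Set.indicator_of_notMem, not_false_eq_true, zero_mul, mul_zero,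
        Pi.one_apply]
    · exact (hW.indicator hMB).mul ((measurable_one.indicator hM).comp (by fun_prop))
  · refine Measurable.aemeasurable ?_
    exact ((hW.indicator hMB).comp measurable_fst).mul ((measurable_one.indicator hM).comp
      (hadd.comp (f := fun p : X × ℝ => (p.1, -p.2)) (by fun_prop)))
  · refine Measurable.aemeasurable ?_
    exact ((hW.indicator hM).comp measurable_fst).mul ((measurable_one.indicator hMB).comp hadd)

lemma lo_le (n : ℕ) (i j : Fin n) (x : Fin n × Fin 2 → ℝ) (hx : x ∈ MSet n) :
    loM (x (i, 0) + x (j, 0)) ≤ x (i, 0) ∧ x (i, 0) ≤ hiM (x (i, 0) + x (j, 0)) := by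
  have hi := mem_MSet_le n x hx i
  have hj := mem_MSet_le n x hx j
  unfold loM hiM
  exact ⟨max_le (by linarith) (by linarith), le_min (by linarith) (by linarith)⟩

/-- Length of the resampling interval. -/
def lenM (n : ℕ) (i j : Fin n) (x : Fin n × Fin 2 → ℝ) : ℝ :=
  hiM (x (i, 0) + x (j, 0)) - loM (x (i, 0) + x (j, 0))

lemma measurable_lenM (n : ℕ) (i j : Fin n) : Measurable (lenM n i j) := by
  unfold lenM hiM loM
  fun_prop

lemma sum_add (n : ℕ) (i j : Fin n) (hij : i ≠ j) (r : ℝ) (x : Fin n × Fin 2 → ℝ) :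
    (x + r • dirV n i j) (i, 0) + (x + r • dirV n i j) (j, 0) = x (i, 0) + x (j, 0) := by
  simp [dirV_zero n i j hij, hij, hij.symm]
  ring

lemma lenM_add (n : ℕ) (i j : Fin n) (hij : i ≠ j) (r : ℝ) (x : Fin n × Fin 2 → ℝ) :
    lenM n i j (x + r • dirV n i j) = lenM n i j x := by
  unfold lenM
  rw [sum_add n i j hij]

lemma meas_step_set (n : ℕ) (c : Fin n × Fin n) (x : Fin n × Fin 2 → ℝ)
    (B : Set (Fin n × Fin 2 → ℝ)) (hB : MeasurableSet B) :
    MeasurableSet {l : ℝ | stepM n x (c, l) ∈ B} :=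
  ((measurable_step_fix n c).comp (f := fun l : ℝ => (x, l)) (by fun_prop)) hB

lemma loc1 (n : ℕ) (i j : Fin n) (hij : i ≠ j) (x : Fin n × Fin 2 → ℝ) (hx : x ∈ MSet n)
    (hL : 0 < lenM n i j x) (B : Set (Fin n × Fin 2 → ℝ)) (hB : MeasurableSet B) :
    ((volume : Measure ℝ).restrict (Set.Icc 0 1)) {l | stepM n x ((i, j), l) ∈ B} =
      ENNReal.ofReal (lenM n i j x)⁻¹ *
        volume {r : ℝ | x + r • dirV n i j ∈ (MSet n ∩ {y | 0 < lenM n i j y}) ∩ B} := by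
  rw [Measure.restrict_apply (meas_step_set n (i, j) x B hB)]
  have hset : {l | stepM n x ((i, j), l) ∈ B} ∩ Set.Icc 0 1 =
      (fun l => l * lenM n i j x) ⁻¹' ((fun r => r + (loM (x (i, 0) + x (j, 0)) - x (i, 0))) ⁻¹'
        {r : ℝ | x + r • dirV n i j ∈ (MSet n ∩ {y | 0 < lenM n i j y}) ∩ B}) := by
    ext l
    simp only [Set.mem_inter_iff, Set.mem_ofPred_eq, Set.mem_preimage, Set.mem_Icc,
      lenM_add n i j hij, hL, and_true]
    rw [MSet_add n i j hij _ x hx, step_eq n i j hij l x hx, and_comm]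
    have e : loM (x (i, 0) + x (j, 0)) + l * (hiM (x (i, 0) + x (j, 0)) -
        loM (x (i, 0) + x (j, 0))) - x (i, 0) =
        l * lenM n i j x + (loM (x (i, 0) + x (j, 0)) - x (i, 0)) := by unfold lenM; ring
    rw [e]
    refine and_congr ?_ Iff.rfl
    have hd : hiM (x (i, 0) + x (j, 0)) = loM (x (i, 0) + x (j, 0)) + lenM n i j x := by
      unfold lenM; ring
    rw [hd]
    constructor
    · rintro ⟨h1, h2⟩
      constructor <;> nlinarith
    · rintro ⟨h1, h2⟩
      constructor
      · by_contra h
        nlinarith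
      · by_contra h
        nlinarith
  rw [hset, Real.volume_preimage_mul_right hL.ne', measure_preimage_add_right,
    abs_of_pos (inv_pos.2 hL)]

lemma inv_pair (n : ℕ) (hn : 0 < n) (i j : Fin n) (hij : i ≠ j)
    (B : Set (Fin n × Fin 2 → ℝ)) (hB : MeasurableSet B) :
    ∫⁻ x in MSet n, ((volume : Measure ℝ).restrict (Set.Icc 0 1))
      {l | stepM n x ((i, j), l) ∈ B} ∂(μH[(n : ℝ) - 1]) = μH[(n : ℝ) - 1] (MSet n ∩ B) := by
  have := sfinite_AffM n hn
  set μ := (μH[(n : ℝ) - 1] : Measure (Fin n × Fin 2 → ℝ)).restrict (AffM n) with hμ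
  have hsub : MSet n ⊆ AffM n := fun x hx => ((MSet_iff n x).1 hx).2
  have hr : (μH[(n : ℝ) - 1] : Measure (Fin n × Fin 2 → ℝ)).restrict (MSet n) =
      μ.restrict (MSet n) := by
    rw [hμ, Measure.restrict_restrict_of_subset hsub]
  have hr2 : μH[(n : ℝ) - 1] (MSet n ∩ B) = μ (MSet n ∩ B) := by
    rw [hμ, Measure.restrict_apply ((measurableSet_MSet n).inter hB),
      Set.inter_eq_left.2 (Set.inter_subset_left.trans hsub)]
  rw [hr, hr2]
  have hP : MeasurableSet {y | 0 < lenM n i j y} :=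
    measurableSet_lt measurable_const (measurable_lenM n i j)
  have hM := measurableSet_MSet n
  have hM0 := hM.inter hP
  rw [← lintegral_inter_add_sdiff _ (MSet n) hP]
  have h1 : ∫⁻ x in MSet n ∩ {y | 0 < lenM n i j y}, ((volume : Measure ℝ).restrict (Set.Icc 0 1))
      {l | stepM n x ((i, j), l) ∈ B} ∂μ = μ ((MSet n ∩ {y | 0 < lenM n i j y}) ∩ B) := by
    rw [setLIntegral_congr_fun hM0 (fun x hx => loc1 n i j hij x hx.1 hx.2 B hB)]
    rw [swap_abs μ (dirV n i j) (fun r => mp_translate n i j hij r) _ B hM0 hB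
      (fun x => ENNReal.ofReal (lenM n i j x)⁻¹)
      (ENNReal.measurable_ofReal.comp (measurable_lenM n i j).inv)
      (fun r x => by simp only [lenM_add n i j hij])]
    rw [← setLIntegral_one]
    refine setLIntegral_congr_fun (hM0.inter hB) fun x hx => ?_
    have := loc1 n i j hij x hx.1.1 hx.1.2 Set.univ MeasurableSet.univ
    rw [Set.inter_univ] at this
    rw [← this]
    simp
  have h2 : ∫⁻ x in MSet n \ {y | 0 < lenM n i j y}, ((volume : Measure ℝ).restrict (Set.Icc 0 1))
      {l | stepM n x ((i, j), l) ∈ B} ∂μ = μ ((MSet n \ {y | 0 < lenM n i j y}) ∩ B) := by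
    have hM1 := hM.diff hP
    rw [Set.inter_comm, ← Measure.restrict_apply hB, ← lintegral_indicator_one hB]
    refine setLIntegral_congr_fun hM1 fun x hx => ?_
    have hs : ∀ l, stepM n x ((i, j), l) = x := by
      intro l
      have h3 := lo_le n i j x hx.1
      have h4 : ¬ 0 < lenM n i j x := hx.2
      unfold lenM at h4
      rw [step_eq n i j hij l x hx.1]
      have h5 : hiM (x (i, 0) + x (j, 0)) - loM (x (i, 0) + x (j, 0)) = 0 := by linarith
      have h6 : loM (x (i, 0) + x (j, 0)) - x (i, 0) = 0 := by linarith
      rw [h5, mul_zero, add_zero, h6, zero_smul, add_zero]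
    simp only [hs]
    by_cases h : x ∈ B <;> simp [h]
  rw [h1, h2]
  have e1 : (MSet n ∩ {y | 0 < lenM n i j y}) ∩ B = (MSet n ∩ B) ∩ {y | 0 < lenM n i j y} := by
    ext; simp only [Set.mem_inter_iff]; tauto
  have e2 : (MSet n \ {y | 0 < lenM n i j y}) ∩ B = (MSet n ∩ B) \ {y | 0 < lenM n i j y} := by
    ext; simp only [Set.mem_inter_iff, Set.mem_sdiff]; tauto
  rw [e1, e2, measure_inter_add_sdiff _ hP]

lemma UM_apply (n : ℕ) (B : Set (Fin n × Fin 2 → ℝ)) (hB : MeasurableSet B) :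
    UM n B = (μH[(n : ℝ) - 1] (MSet n))⁻¹ * μH[(n : ℝ) - 1] (MSet n ∩ B) := by
  unfold UM
  rw [Measure.smul_apply, Measure.restrict_apply hB, Set.inter_comm, smul_eq_mul]

lemma UM_univ (n : ℕ) : UM n Set.univ ≤ 1 := by
  rw [UM_apply n _ MeasurableSet.univ, Set.inter_univ]
  exact ENNReal.inv_mul_le_one _

instance (n : ℕ) : IsFiniteMeasure (UM n) := ⟨(UM_univ n).trans_lt ENNReal.one_lt_top⟩

lemma UM_MSet_compl (n : ℕ) : UM n (MSet n)ᶜ = 0 := by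
  rw [UM_apply n _ (measurableSet_MSet n).compl]
  simp

lemma UM_inv (n : ℕ) (hn : 0 < n) (i j : Fin n) (hij : i ≠ j)
    (B : Set (Fin n × Fin 2 → ℝ)) (hB : MeasurableSet B) :
    ∫⁻ x, ((volume : Measure ℝ).restrict (Set.Icc 0 1))
      {l | stepM n x ((i, j), l) ∈ B} ∂(UM n) = UM n B := by
  rw [UM_apply n B hB, ← inv_pair n hn i j hij B hB]
  unfold UM
  rw [lintegral_smul_measure, smul_eq_mul]

lemma UM_le (n : ℕ) (hn : 0 < n) (i j : Fin n) (hij : i ≠ j)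
    (B : Set (Fin n × Fin 2 → ℝ)) (hB : MeasurableSet B) (a : ENNReal)
    (h : ∀ x ∈ MSet n, ((volume : Measure ℝ).restrict (Set.Icc 0 1))
      {l | stepM n x ((i, j), l) ∈ B} ≤ a) : UM n B ≤ a := by
  rw [← UM_inv n hn i j hij B hB]
  calc _ ≤ ∫⁻ x, a ∂(UM n) := by
        refine lintegral_mono_ae ?_
        have : ∀ᵐ x ∂(UM n), x ∈ MSet n := by
          rw [ae_iff]; exact UM_MSet_compl n
        filter_upwards [this] with x hx using h x hx
    _ = a * UM n Set.univ := lintegral_const a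
    _ ≤ a * 1 := by gcongr; exact UM_univ n
    _ = a := mul_one a

lemma lo_formula (s l : ℝ) (h1 : 0 ≤ l) (h2 : l ≤ 1) :
    (1 ≤ s → s ≤ 4 → l ≤ loM s + l * (hiM s - loM s)) ∧
    (s ≤ 3 → 0 ≤ s → 1 - l ≤ 2 - (loM s + l * (hiM s - loM s))) := by
  unfold loM hiM
  rcases le_total s 2 with h | h
  · rw [max_eq_left (by linarith), min_eq_right h]
    constructor <;> intros <;> nlinarith
  · rw [max_eq_right (by linarith), min_eq_left h]
    constructor <;> intros <;> nlinarith

lemma marg_low (n : ℕ) (hn : 0 < n) (i j : Fin n) (hij : i ≠ j) (ε : ℝ) :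
    UM n {x | x (i, 0) ≤ ε ∧ 1 ≤ x (i, 0) + x (j, 0)} ≤ ENNReal.ofReal ε := by
  have hB : MeasurableSet {x : Fin n × Fin 2 → ℝ | x (i, 0) ≤ ε ∧ 1 ≤ x (i, 0) + x (j, 0)} :=
    by
    rw [Set.ofPred_and]
    exact (measurableSet_le (by fun_prop) (by fun_prop)).inter
      (measurableSet_le (by fun_prop) (by fun_prop))
  refine UM_le n hn i j hij _ hB _ fun x hx => ?_
  rw [Measure.restrict_apply (meas_step_set n (i, j) x _ hB)]
  calc _ ≤ volume (Set.Icc 0 ε) := by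
        refine measure_mono ?_
        rintro l ⟨hl, h1, h2⟩
        refine ⟨h1, ?_⟩
        simp only [Set.mem_ofPred_eq] at hl
        rw [step_eq n i j hij l x hx, sum_add n i j hij] at hl
        have hi := mem_MSet_le n x hx i
        have hj := mem_MSet_le n x hx j
        have h3 := (lo_formula (x (i, 0) + x (j, 0)) l h1 h2).1 hl.2 (by linarith)
        have h4 := hl.1
        simp [dirV_zero n i j hij, hij] at h4
        linarith
    _ = ENNReal.ofReal ε := by simp

lemma marg_high (n : ℕ) (hn : 0 < n) (i j : Fin n) (hij : i ≠ j) (ε : ℝ) :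
    UM n {x | 2 - ε ≤ x (i, 0) ∧ x (i, 0) + x (j, 0) ≤ 3} ≤ ENNReal.ofReal ε := by
  have hB : MeasurableSet {x : Fin n × Fin 2 → ℝ | 2 - ε ≤ x (i, 0) ∧ x (i, 0) + x (j, 0) ≤ 3} :=
    by
    rw [Set.ofPred_and]
    exact (measurableSet_le (by fun_prop) (by fun_prop)).inter
      (measurableSet_le (by fun_prop) (by fun_prop))
  refine UM_le n hn i j hij _ hB _ fun x hx => ?_
  rw [Measure.restrict_apply (meas_step_set n (i, j) x _ hB)]
  calc _ ≤ volume (Set.Icc (1 - ε) 1) := by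
        refine measure_mono ?_
        rintro l ⟨hl, h1, h2⟩
        refine ⟨?_, h2⟩
        simp only [Set.mem_ofPred_eq] at hl
        rw [step_eq n i j hij l x hx, sum_add n i j hij] at hl
        have hi := mem_MSet_le n x hx i
        have hj := mem_MSet_le n x hx j
        have h3 := (lo_formula (x (i, 0) + x (j, 0)) l h1 h2).2 hl.2 (by linarith)
        have h4 := hl.1
        simp [dirV_zero n i j hij, hij] at h4
        linarith
    _ = ENNReal.ofReal ε := by simp

lemma UM_union (n : ℕ) (i : Fin n) (E : Set (Fin n × Fin 2 → ℝ))
    (F : Fin n → Set (Fin n × Fin 2 → ℝ)) (a : ENNReal) (hF : ∀ j, j ≠ i → UM n (F j) ≤ a)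
    (h : ∀ x ∈ MSet n, x ∈ E → ∃ j, j ≠ i ∧ x ∈ F j) : UM n E ≤ n * a := by
  calc UM n E ≤ UM n ((MSet n)ᶜ ∪ ⋃ j ∈ Finset.univ.erase i, F j) := by
        refine measure_mono fun x hx => ?_
        by_cases hM : x ∈ MSet n
        · obtain ⟨j, h1, h2⟩ := h x hM hx
          right
          simp only [Set.mem_iUnion]
          exact ⟨j, by simp [h1], h2⟩
        · left; exact hM
    _ ≤ UM n (MSet n)ᶜ + ∑ j ∈ Finset.univ.erase i, UM n (F j) :=
        (measure_union_le _ _).trans (by gcongr; exact measure_biUnion_finset_le _ _)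
    _ ≤ 0 + ∑ j ∈ Finset.univ.erase i, a := by
        rw [UM_MSet_compl]
        gcongr with j hj
        exact hF j (by simpa using hj)
    _ ≤ n * a := by
        simp only [Finset.sum_const, zero_add, nsmul_eq_mul]
        gcongr
        exact_mod_cast (Finset.card_le_univ _).trans (by simp)

lemma marg0 (n : ℕ) (hn : 2 ≤ n) (i : Fin n) (ε : ℝ) (hε : ε ≤ 1) :
    UM n {x | x (i, 0) ≤ ε} ≤ n * ENNReal.ofReal ε := by
  refine UM_union n i _ (fun j => {x | x (i, 0) ≤ ε ∧ 1 ≤ x (i, 0) + x (j, 0)}) _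
    (fun j hj => marg_low n (by omega) i j hj.symm ε) ?_
  intro x hx hE
  by_contra hcon
  push Not at hcon
  have hE' : x (i, 0) ≤ ε := hE
  have hi := mem_MSet_le n x hx i
  have hlt : ∀ j, j ≠ i → x (j, 0) < 1 := by
    intro j hj
    by_contra hc
    exact hcon j hj ⟨hE', by linarith⟩
  have hsum := hx.2.2 0
  have : Nontrivial (Fin n) := Fin.nontrivial_iff_two_le.2 hn
  obtain ⟨j, hj⟩ := exists_ne i
  have : ∑ a : Fin n, x (a, 0) < ∑ a : Fin n, (1 : ℝ) := by
    refine Finset.sum_lt_sum (fun a _ => ?_) ⟨j, Finset.mem_univ _, hlt j hj⟩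
    by_cases h : a = i
    · rw [h]; linarith
    · exact (hlt a h).le
  simp at this
  linarith

lemma marg1 (n : ℕ) (hn : 2 ≤ n) (i : Fin n) (ε : ℝ) (hε : ε ≤ 1) :
    UM n {x | 2 - ε ≤ x (i, 0)} ≤ n * ENNReal.ofReal ε := by
  refine UM_union n i _ (fun j => {x | 2 - ε ≤ x (i, 0) ∧ x (i, 0) + x (j, 0) ≤ 3}) _
    (fun j hj => marg_high n (by omega) i j hj.symm ε) ?_
  intro x hx hE
  by_contra hcon
  push Not at hcon
  have hE' : 2 - ε ≤ x (i, 0) := hE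
  have hi := mem_MSet_le n x hx i
  have hlt : ∀ j, j ≠ i → 1 < x (j, 0) := by
    intro j hj
    by_contra hc
    exact hcon j hj ⟨hE', by linarith⟩
  have hsum := hx.2.2 0
  have : Nontrivial (Fin n) := Fin.nontrivial_iff_two_le.2 hn
  obtain ⟨j, hj⟩ := exists_ne i
  have : ∑ a : Fin n, (1 : ℝ) < ∑ a : Fin n, x (a, 0) := by
    refine Finset.sum_lt_sum (fun a _ => ?_) ⟨j, Finset.mem_univ _, hlt j hj⟩
    by_cases h : a = i
    · rw [h]; linarith
    · exact (hlt a h).le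
  simp at this
  linarith

lemma UM_mono_M (n : ℕ) (E F : Set (Fin n × Fin 2 → ℝ)) (h : ∀ x ∈ MSet n, x ∈ E → x ∈ F) :
    UM n E ≤ UM n F := by
  refine measure_mono_ae ?_
  have : ∀ᵐ x ∂(UM n), x ∈ MSet n := by
    rw [ae_iff]; exact UM_MSet_compl n
  filter_upwards [this] with x hx using h x hx

lemma marg_le (n : ℕ) (hn : 2 ≤ n) (q : Fin n × Fin 2) (ε : ℝ) (hε : ε ≤ 1) :
    UM n {x | x q ≤ ε} ≤ n * ENNReal.ofReal ε := by
  obtain ⟨i, b⟩ := q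
  fin_cases b
  · exact marg0 n hn i ε hε
  · refine (UM_mono_M n _ _ fun x hx hE => ?_).trans (marg1 n hn i ε hε)
    have := mem_MSet_le n x hx i
    have hE' : x (i, 1) ≤ ε := hE
    show 2 - ε ≤ x (i, 0)
    linarith

lemma marg_ge (n : ℕ) (hn : 2 ≤ n) (q : Fin n × Fin 2) (ε : ℝ) (hε : ε ≤ 1) :
    UM n {x | 2 - ε ≤ x q} ≤ n * ENNReal.ofReal ε := by
  obtain ⟨i, b⟩ := q
  fin_cases b
  · exact marg1 n hn i ε hε
  · refine (UM_mono_M n _ _ fun x hx hE => ?_).trans (marg0 n hn i ε hε)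
    have := mem_MSet_le n x hx i
    have hE' : 2 - ε ≤ x (i, 1) := hE
    show x (i, 0) ≤ ε
    linarith

lemma isProb_unifOn {α : Type*} [MeasurableSpace α] (s : Finset α) (hs : s.Nonempty) :
    IsProbabilityMeasure (unifOn s) := by
  constructor
  unfold unifOn
  simp only [Measure.smul_apply, Measure.finsetSum_apply, measure_univ, Finset.sum_const,
    smul_eq_mul, nsmul_eq_mul, mul_one]
  exact ENNReal.inv_mul_cancel (by simpa using hs.ne_empty) (by simp)

lemma pairsF_nonempty (n : ℕ) (hn : 2 ≤ n) : (pairsF n).Nonempty := by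
  refine ⟨(⟨0, by omega⟩, ⟨1, by omega⟩), ?_⟩
  simp [pairsF]

lemma isProb_driveM (n : ℕ) (hn : 2 ≤ n) : IsProbabilityMeasure (driveM n) := by
  have := isProb_unifOn _ (pairsF_nonempty n hn)
  have : IsProbabilityMeasure ((volume : Measure ℝ).restrict (Set.Icc 0 1)) := ⟨by simp⟩
  unfold driveM
  infer_instance

lemma mp_step (n : ℕ) (hn : 2 ≤ n) :
    MeasurePreserving (fun p : (Fin n × Fin 2 → ℝ) × ((Fin n × Fin n) × ℝ) => stepM n p.1 p.2)
      ((UM n).prod (driveM n)) (UM n) := by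
  have hp := isProb_driveM n hn
  refine ⟨measurable_step n, ?_⟩
  ext B hB
  rw [Measure.map_apply (measurable_step n) hB, Measure.prod_apply (measurable_step n hB)]
  have e : ∀ x, driveM n (Prod.mk x ⁻¹' ((fun p : (Fin n × Fin 2 → ℝ) × ((Fin n × Fin n) × ℝ) =>
      stepM n p.1 p.2) ⁻¹' B)) = ((pairsF n).card : ENNReal)⁻¹ * ∑ c ∈ pairsF n,
        ((volume : Measure ℝ).restrict (Set.Icc 0 1)) {l | stepM n x (c, l) ∈ B} := by
    intro x
    unfold driveM
    rw [Measure.prod_apply (measurable_prodMk_left (measurable_step n hB))]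
    unfold unifOn
    rw [lintegral_smul_measure, lintegral_finsetSum_measure, smul_eq_mul]
    congr 1
    refine Finset.sum_congr rfl fun c _ => ?_
    rw [lintegral_dirac]
    rfl
  simp_rw [e]
  have hm : ∀ c, Measurable fun x => ((volume : Measure ℝ).restrict (Set.Icc 0 1))
      {l | stepM n x (c, l) ∈ B} := fun c =>
    measurable_measure_prodMk_left (measurable_step_fix n c hB)
  rw [lintegral_const_mul _ (Finset.measurable_sum _ fun c _ => hm c),
    lintegral_finsetSum _ fun c _ => hm c]
  have e3 : ∀ c ∈ pairsF n, ∫⁻ x, ((volume : Measure ℝ).restrict (Set.Icc 0 1))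
      {l | stepM n x (c, l) ∈ B} ∂(UM n) = UM n B := by
    rintro ⟨i, j⟩ hc
    have : i < j := by simpa [pairsF] using hc
    exact UM_inv n (by omega) i j this.ne B hB
  rw [Finset.sum_congr rfl e3, Finset.sum_const, nsmul_eq_mul, ← mul_assoc,
    ENNReal.inv_mul_cancel (by simpa using (pairsF_nonempty n hn).ne_empty) (by simp), one_mul]

lemma mp_path (n : ℕ) (hn : 2 ≤ n) : ∀ T t : ℕ, t ≤ T →
    MeasurePreserving (fun p : (Fin n × Fin 2 → ℝ) × (Fin T → (Fin n × Fin n) × ℝ) =>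
      ((List.ofFn p.2).take t).foldl (stepM n) p.1)
      ((UM n).prod (Measure.pi fun _ : Fin T => driveM n)) (UM n) := by
  have hp := isProb_driveM n hn
  have h0 : ∀ T, MeasurePreserving (fun p : (Fin n × Fin 2 → ℝ) ×
      (Fin T → (Fin n × Fin n) × ℝ) => p.1)
      ((UM n).prod (Measure.pi fun _ : Fin T => driveM n)) (UM n) := by
    intro T
    exact measurePreserving_fst
  intro T
  induction T with
  | zero =>
    intro t ht
    obtain rfl : t = 0 := by omega
    simpa using h0 0
  | succ T ih =>
    intro t ht
    cases t with
    | zero => simpa using h0 (T + 1)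
    | succ t =>
      have e1 := (MeasurePreserving.id (UM n)).prod
        (measurePreserving_piFinSuccAbove (fun _ : Fin (T + 1) => driveM n) 0)
      have e2 := (measurePreserving_prodAssoc (UM n) (driveM n)
        (Measure.pi fun _ : Fin T => driveM n)).symm
      have e3 := (mp_step n hn).prod
        (MeasurePreserving.id (Measure.pi fun _ : Fin T => driveM n))
      have e4 := (ih t (by omega)).comp (e3.comp (e2.comp e1))
      convert e4 using 1
      funext p
      simp [List.ofFn_succ, MeasurableEquiv.piFinSuccAbove, Fin.removeNth, Fin.tail]
      rfl

lemma event_bound (n : ℕ) (hn : 2 ≤ n) (k : ℝ) (hk : 0 < k) (P : ℝ → Prop)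
    (hP : MeasurableSet {y | P y})
    (h : ∀ q, UM n {x | P (x q)} ≤ n * ENNReal.ofReal ((n : ℝ) ^ (-5.5 - k))) :
    ((UM n).prod (Measure.pi fun _ : Fin (n ^ 2 - 1) => driveM n))
        {p | ∃ q : Fin n × Fin 2, ∃ t ≤ n ^ 2 - 1,
          P (((List.ofFn p.2).take t).foldl (stepM n) p.1 q)} ≤
      ENNReal.ofReal (2 * (n : ℝ) ^ (-k)) := by
  have hn1 : (1 : ℝ) ≤ n := by exact_mod_cast (by omega : 1 ≤ n)
  have hpos : 1 ≤ n ^ 2 := Nat.one_le_pow _ _ (by omega)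
  calc _ ≤ ((UM n).prod (Measure.pi fun _ : Fin (n ^ 2 - 1) => driveM n))
        (⋃ q ∈ (Finset.univ : Finset (Fin n × Fin 2)), ⋃ t ∈ Finset.range (n ^ 2),
          {p | P (((List.ofFn p.2).take t).foldl (stepM n) p.1 q)}) := by
        refine measure_mono ?_
        rintro p ⟨q, t, ht, hh⟩
        simp only [Set.mem_iUnion]
        exact ⟨q, Finset.mem_univ _, t, Finset.mem_range.2 (by omega), hh⟩
    _ ≤ ∑ q : Fin n × Fin 2, ∑ t ∈ Finset.range (n ^ 2),
        ((UM n).prod (Measure.pi fun _ : Fin (n ^ 2 - 1) => driveM n))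
          {p | P (((List.ofFn p.2).take t).foldl (stepM n) p.1 q)} := by
        refine (measure_biUnion_finset_le _ _).trans ?_
        gcongr
        exact measure_biUnion_finset_le _ _
    _ ≤ ∑ q : Fin n × Fin 2, ∑ t ∈ Finset.range (n ^ 2),
        (n * ENNReal.ofReal ((n : ℝ) ^ (-5.5 - k))) := by
        gcongr with q _ t ht
        have ht' := Finset.mem_range.1 ht
        have hms : MeasurableSet {x : Fin n × Fin 2 → ℝ | P (x q)} := measurable_pi_apply q hP
        have := (mp_path n hn (n ^ 2 - 1) t (by omega)).measure_preimage hms.nullMeasurableSet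
        exact (le_of_eq this).trans (h q)
    _ = ENNReal.ofReal (2 * n ^ 4 * (n : ℝ) ^ (-5.5 - k)) := by
        simp only [Finset.sum_const, Finset.card_range, Finset.card_univ, Fintype.card_prod,
          Fintype.card_fin, nsmul_eq_mul]
        rw [ENNReal.ofReal_mul (by positivity), ENNReal.ofReal_mul (by positivity),
          ENNReal.ofReal_pow (by positivity), ENNReal.ofReal_natCast, ENNReal.ofReal_ofNat]
        push_cast
        ring
    _ ≤ ENNReal.ofReal (2 * (n : ℝ) ^ (-k)) := by
        refine ENNReal.ofReal_le_ofReal ?_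
        rw [mul_assoc]
        gcongr
        rw [← Real.rpow_natCast, ← Real.rpow_add (by linarith)]
        refine Real.rpow_le_rpow_of_exponent_le hn1 ?_
        push_cast
        linarith

/-- Largeness lemma for narrow matrices: started from stationarity, over `n²` steps all
entries stay in `(n^{-5.5-k}, 2 - n^{-5.5-k})`, except with probability at most `2 n^{-k}`
for each of the two one-sided events. -/
theorem narrow_matrices_largeness
    (n : ℕ) (k : ℝ) (hk : 0 < k) (hn : max (2 * k) 4096 < (n : ℝ)) :
    ((UM n).prod (Measure.pi fun _ : Fin (n ^ 2 - 1) => driveM n))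
        {p | ∃ q : Fin n × Fin 2, ∃ t ≤ n ^ 2 - 1,
          ((List.ofFn p.2).take t).foldl (stepM n) p.1 q ≤ (n : ℝ) ^ (-5.5 - k)} ≤
      ENNReal.ofReal (2 * (n : ℝ) ^ (-k)) ∧
    ((UM n).prod (Measure.pi fun _ : Fin (n ^ 2 - 1) => driveM n))
        {p | ∃ q : Fin n × Fin 2, ∃ t ≤ n ^ 2 - 1,
          2 - (n : ℝ) ^ (-5.5 - k) ≤ ((List.ofFn p.2).take t).foldl (stepM n) p.1 q} ≤
      ENNReal.ofReal (2 * (n : ℝ) ^ (-k)) := by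
  have hn' : (4096 : ℝ) < n := (le_max_right _ _).trans_lt hn
  have hn2 : 2 ≤ n := by
    have : 4096 < n := by exact_mod_cast hn'
    omega
  have hε : (n : ℝ) ^ (-5.5 - k) ≤ 1 :=
    Real.rpow_le_one_of_one_le_of_nonpos (by linarith) (by linarith)
  exact ⟨event_bound n hn2 k hk (fun y => y ≤ (n : ℝ) ^ (-5.5 - k)) measurableSet_Iic
      (fun q => marg_le n hn2 q _ hε),
    event_bound n hn2 k hk (fun y => 2 - (n : ℝ) ^ (-5.5 - k) ≤ y) measurableSet_Ici
      (fun q => marg_ge n hn2 q _ hε)⟩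

end
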